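/- Let 𝒪 be a polynomial ring over a field k of characteristic zero, 𝔥 ⊆ 𝔤 complete intersection ideals of grades p and n, with 𝒪/𝔤 reduced and Spec(𝒪/𝔤) connected, and the localization of 𝒪/𝔥 at (the image of) every minimal prime of 𝔤 a regular local ring. Suppose 𝔤 is generated by an 𝒪-regular sequence g₁,…,g_n and 𝔥 by h₁,…,h_p with h_i ≡ Σ_{j=1}^p b_{ij} g_j mod 𝔤² (i = 1,…,p). Then b = det(b_{ij}) is a non-zerodivisor in 𝒪/𝔤; the images ĝ₁,…,ĝ_p of g₁,…,g_p generate the torsion T(M) of the conormal module M = 𝔤/(𝔤²+𝔥) over 𝒪/𝔤; the images ĝ_{p+1},…,ĝ_n of g_{p+1},…,g_n freely generate N = M/T(M) over 𝒪/𝔤; and M ≅ T(M) ⊕ N with rank(M) = rank(N) = n − p. -/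

import Mathlib

open Ideal

/-- `ξ ∈ Der_h(O)`: the derivation `ξ` preserves the ideal `h`. -/
def PreservesIdeal {k O : Type*} [CommRing k] [CommRing O] [Algebra k O]
    (h : Ideal O) (xi : Derivation k O O) : Prop :=
  ∀ x ∈ h, xi x ∈ h

/-- The primitive ideal `∫_h g` of `g` relative to `h`: all `f ∈ g` such that
`ξ f ∈ g` for every derivation `ξ` preserving `h`. -/
def primitiveIdeal (k : Type*) {O : Type*} [CommRing k] [CommRing O] [Algebra k O]
    (h g : Ideal O) : Ideal O where
  carrier := {f | f ∈ g ∧ ∀ xi : Derivation k O O, PreservesIdeal h xi → xi f ∈ g}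
  add_mem' := fun {a b} ha hb =>
    ⟨g.add_mem ha.1 hb.1, fun xi hxi => by
      rw [map_add]; exact g.add_mem (ha.2 xi hxi) (hb.2 xi hxi)⟩
  zero_mem' := ⟨g.zero_mem, fun xi _ => by simp⟩
  smul_mem' := fun c f hf =>
    ⟨g.smul_mem c hf.1, fun xi hxi => by
      rw [smul_eq_mul, Derivation.leibniz]
      exact g.add_mem (g.smul_mem _ (hf.2 xi hxi))
        (by rw [smul_eq_mul]; exact Ideal.mul_mem_right _ g hf.1)⟩

/-- The set of elements of `g` whose class in the conormal module `M = g/(g² + h)` is a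
torsion element over `O/g`, i.e. is killed by a non-zero-divisor of `O/g`.  This is the
preimage in `O` of the torsion submodule `T(M)` of `M`. -/
def torsionSet {O : Type*} [CommRing O] (h g : Ideal O) : Set O :=
  {f | f ∈ g ∧ ∃ β : O,
    Ideal.Quotient.mk g β ∈ nonZeroDivisors (O ⧸ g) ∧ β * f ∈ g ^ 2 ⊔ h}

/-- A regular local ring: a noetherian local ring whose maximal ideal can be generated by
Krull-dimension many elements. -/
def IsRegularLocal (R : Type*) [CommRing R] : Prop :=
  IsNoetherianRing R ∧ IsLocalRing R ∧ ∃ s : Finset R,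
    (Ideal.span (s : Set R)).IsMaximal ∧ (s.card : WithBot ℕ∞) = ringKrullDim R

/-- The localization of `R` at a prime ideal (with the primality assumption explicit). -/
abbrev locAt {R : Type*} [CommRing R] (q : Ideal R) (hq : q.IsPrime) : Type _ :=
  @Localization.AtPrime R _ q hq

/-- The localization of `O/h` at the image of the prime `p` is a regular local ring. -/
def regularAtImage {O : Type*} [CommRing O] (h p : Ideal O) : Prop :=
  ∀ hP : (p.map (Ideal.Quotient.mk h)).IsPrime,
    IsRegularLocal (locAt (p.map (Ideal.Quotient.mk h)) hP)

/-- The `(t+1)`-st through `n`-th members `g_{t+1}, …, g_n` of a family `g_1, …, g_n`. -/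
def tailFam {O : Type*} {n : ℕ} (gs : Fin n → O) (t : ℕ) (j : Fin (n - t)) : O :=
  gs ⟨t + (j : ℕ), by have := j.isLt; omega⟩

/-!
A regular sequence generating `g` gives a basis of `g / g²` over `O ⧸ g`. At a minimal prime `q`
of `g`, regularity of `(O ⧸ h)_q` makes the classes of the `h_i` in `q / q²` linearly independent,
as one sees by counting generators of the maximal ideal of `O_q` against its Krull dimension. These
classes are the images of the `g_j`, `j ≤ p`, under `b`, so `det b ∉ q`; as `O ⧸ g` is reduced, this
makes `det b` a non-zero-divisor there. By Cramer's rule `det b` kills the classes of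
`g₁, …, g_p` in `M`, and `h ⊆ g² + (g₁, …, g_p)` keeps those of the remaining `g_j` independent.
-/

section ConormalIndependent

open RingTheory.Sequence Matrix

variable {R ι κ : Type*} [CommRing R] [Fintype ι] [Fintype κ]

/-- The classes of the `u i` in `I / I²` are linearly independent over `R ⧸ I`, stated through
representatives in `R` so that the `u i` need not be packaged as elements of `I`. -/
def ConormalIndependent (I : Ideal R) (u : ι → R) : Prop :=
  ∀ c : ι → R, c ⬝ᵥ u ∈ I ^ 2 → ∀ i, c i ∈ I

lemma dotProduct_mem_of_right {I : Ideal R} (c : ι → R) {u : ι → R} (hu : ∀ i, u i ∈ I) :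
    c ⬝ᵥ u ∈ I :=
  I.sum_mem fun i _ => I.mul_mem_left _ (hu i)

lemma dotProduct_mem_sq {I : Ideal R} {c u : ι → R} (hc : ∀ i, c i ∈ I) (hu : ∀ i, u i ∈ I) :
    c ⬝ᵥ u ∈ I ^ 2 :=
  sum_mem fun i _ => pow_two I ▸ Ideal.mul_mem_mul (hc i) (hu i)

lemma ConormalIndependent.comp_equiv {I : Ideal R} {u : ι → R} (hu : ConormalIndependent I u)
    (e : κ ≃ ι) : ConormalIndependent I (u ∘ e) := by
  intro c hc i
  have := hu (c ∘ e.symm) (by rwa [comp_equiv_symm_dotProduct]) (e i)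
  rwa [Function.comp_apply, e.symm_apply_apply] at this

lemma ofList_ofFn {n : ℕ} (u : Fin n → R) :
    Ideal.ofList (List.ofFn u) = Ideal.span (Set.range u) := by
  simp only [Ideal.ofList, List.mem_ofFn, Set.range]

lemma isWeaklyRegular_ofFn_succ_iff {n : ℕ} {u : Fin (n + 1) → R} :
    IsWeaklyRegular R (List.ofFn u) ↔
      IsWeaklyRegular R (List.ofFn (Fin.init u)) ∧
        ∀ r, r * u (Fin.last n) ∈ Ideal.span (Set.range (Fin.init u)) →
          r ∈ Ideal.span (Set.range (Fin.init u)) := by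
  rw [List.ofFn_succ_last, isWeaklyRegular_append_iff, isWeaklyRegular_singleton_iff,
    isSMulRegular_iff_right_eq_zero_of_smul, (Submodule.Quotient.mk_surjective _).forall]
  simp only [← Submodule.Quotient.mk_smul, Submodule.Quotient.mk_eq_zero, smul_eq_mul,
    Ideal.mul_top, mul_comm (u (Fin.last n))]
  rw [← ofList_ofFn]
  rfl

/-- If `c ⬝ᵥ u = 0`, regularity of the last term puts the last coefficient in the span of the
earlier terms; substituting that expression leaves a syzygy of the earlier terms. -/
lemma mem_span_range_of_dotProduct_eq_zero {n : ℕ} {u : Fin n → R}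
    (hu : IsWeaklyRegular R (List.ofFn u)) {c : Fin n → R} (hc : c ⬝ᵥ u = 0) (i : Fin n) :
    c i ∈ Ideal.span (Set.range u) := by
  induction n with
  | zero => exact i.elim0
  | succ n ih =>
    obtain ⟨hinit, hlast⟩ := isWeaklyRegular_ofFn_succ_iff.1 hu
    have hmono : Ideal.span (Set.range (Fin.init u)) ≤ Ideal.span (Set.range u) :=
      Ideal.span_mono (Set.range_comp_subset_range Fin.castSucc u)
    have hsplit : Fin.init c ⬝ᵥ Fin.init u + c (Fin.last n) * u (Fin.last n) = 0 := by
      rw [← hc, dotProduct, dotProduct, Fin.sum_univ_castSucc]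
      rfl
    have hclast : c (Fin.last n) ∈ Ideal.span (Set.range (Fin.init u)) :=
      hlast _ <| (Ideal.add_mem_iff_right _ <| dotProduct_mem_of_right _
        fun j => Ideal.subset_span (Set.mem_range_self j)).1 (hsplit ▸ zero_mem _)
    refine Fin.lastCases (hmono hclast) (fun j => ?_) i
    obtain ⟨d, hd⟩ := Ideal.mem_span_range_iff_exists_fun.1 hclast
    have hsyz : (Fin.init c + u (Fin.last n) • d) ⬝ᵥ Fin.init u = 0 := by
      rw [add_dotProduct, smul_dotProduct, smul_eq_mul, mul_comm, ← hsplit, ← hd]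
      rfl
    exact (Ideal.add_mem_iff_left _ <| Ideal.mul_mem_right _ _ <|
      Ideal.subset_span (Set.mem_range_self _)).1 (hmono (ih hinit hsyz j))

lemma conormalIndependent_of_isWeaklyRegular {n : ℕ} {u : Fin n → R}
    (hu : IsWeaklyRegular R (List.ofFn u)) :
    ConormalIndependent (Ideal.span (Set.range u)) u := by
  intro c hc i
  rw [pow_two, ← smul_eq_mul, Submodule.mem_ideal_smul_span_iff_exists_sum] at hc
  obtain ⟨e, he, hsum⟩ := hc
  have hsyz : (c - ⇑e) ⬝ᵥ u = 0 := by
    rw [sub_dotProduct, ← hsum, Finsupp.sum_fintype _ _ (by simp)]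
    exact sub_self _
  simpa using add_mem (mem_span_range_of_dotProduct_eq_zero hu hsyz i) (he i)

end ConormalIndependent

section RegularQuotient

open RingTheory.Sequence IsLocalRing Matrix

lemma IsRegularLocal.isRegularLocalRing {R : Type*} [CommRing R] (hR : IsRegularLocal R) :
    IsRegularLocalRing R := by
  obtain ⟨_, _, s, hmax, hcard⟩ := hR
  refine .of_spanFinrank_maximalIdeal_le R ?_
  rw [← eq_maximalIdeal hmax, ← hcard, ← Set.ncard_coe_finset s]
  exact_mod_cast Submodule.spanFinrank_span_le_ncard_of_finite (R := R) s.finite_toSet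

lemma ringKrullDim_le_ncard_of_span_sup_sq_eq {R : Type*} [CommRing R] [IsNoetherianRing R]
    [IsLocalRing R] {t : Set R} (ht : t.Finite)
    (hspan : Ideal.span t ⊔ maximalIdeal R ^ 2 = maximalIdeal R) :
    ringKrullDim R ≤ t.ncard := by
  have hnakayama : maximalIdeal R ≤ Ideal.span t :=
    Submodule.le_of_le_smul_of_le_jacobson_bot (I := maximalIdeal R)
      (IsNoetherian.noetherian _) (maximalIdeal_le_jacobson _)
      (by rw [smul_eq_mul, ← pow_two]; exact hspan.ge)
  have hgen : maximalIdeal R = Ideal.span t := hnakayama.antisymm (le_sup_left.trans hspan.le)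
  refine (ringKrullDim_le_spanFinrank_maximalIdeal R).trans ?_
  rw [hgen]
  exact_mod_cast Submodule.spanFinrank_span_le_ncard_of_finite (R := R) ht

lemma comap_span_eq_span_image_sup_ker {R S : Type*} [CommRing R] [CommRing S] (φ : R →+* S)
    {l : S → R} (hl : Function.RightInverse l φ) (t : Set S) :
    (Ideal.span t).comap φ = Ideal.span (l '' t) ⊔ RingHom.ker φ := by
  rw [← Ideal.comap_map_of_surjective' φ hl.surjective, Ideal.map_span, ← Set.image_comp,
    hl.comp_eq_id, Set.image_id]

lemma span_range_le_of_isUnit_coeff {R ι : Type*} [CommRing R] [Fintype ι] {J : Ideal R}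
    {a u : ι → R} (ha : a ⬝ᵥ u ∈ J) {i : ι} (hi : IsUnit (a i)) :
    Ideal.span (Set.range u) ≤ Ideal.span (u '' {i}ᶜ) ⊔ J := by
  classical
  have hne : ∀ j ≠ i, u j ∈ Ideal.span (u '' {i}ᶜ) ⊔ J := fun j hj =>
    Ideal.mem_sup_left (Ideal.subset_span ⟨j, hj, rfl⟩)
  have heq : u i ∈ Ideal.span (u '' {i}ᶜ) ⊔ J := by
    rw [← Ideal.unit_mul_mem_iff_mem _ hi]
    rw [dotProduct, ← Finset.add_sum_erase _ _ (Finset.mem_univ i)] at ha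
    exact (Ideal.add_mem_iff_left _ <| Ideal.sum_mem _ fun j hj =>
      Ideal.mul_mem_left _ _ (hne j (Finset.ne_of_mem_erase hj))).1 (Ideal.mem_sup_right ha)
  rw [Ideal.span_le]
  rintro _ ⟨j, rfl⟩
  obtain rfl | hj := eq_or_ne j i
  exacts [heq, hne j hj]

/-- A relation with a unit coefficient would let one drop some `hs i` from the generators of the
maximal ideal of `R` obtained from `hs` and lifts of `dim S` generators of that of `S`, leaving
fewer than `dim R` of them. -/
lemma conormalIndependent_maximalIdeal_of_isRegularLocalRing {R S : Type*} [CommRing R]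
    [IsNoetherianRing R] [IsLocalRing R] [CommRing S] [IsRegularLocalRing S] {p : ℕ}
    {hs : Fin p → R} (hreg : IsRegular R (List.ofFn hs)) {φ : R →+* S}
    (hφ : Function.Surjective φ) (hker : RingHom.ker φ = Ideal.span (Set.range hs)) :
    ConormalIndependent (maximalIdeal R) hs := by
  intro a ha i
  by_contra hi
  have hunit : IsUnit (a i) := by rwa [mem_maximalIdeal, mem_nonunits_iff, not_not] at hi
  obtain ⟨l, hl⟩ := hφ.hasRightInverse
  let t : Set S := (maximalIdeal S).generators
  have hfg : Submodule.FG (maximalIdeal S) := IsNoetherian.noetherian _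
  have hmax : maximalIdeal R = Ideal.span (l '' t) ⊔ Ideal.span (Set.range hs) := by
    rw [← hker, ← comap_span_eq_span_image_sup_ker φ hl]
    exact (eq_maximalIdeal (Ideal.comap_isMaximal_of_surjective φ hφ)).symm.trans
      (congrArg _ (maximalIdeal S).span_generators.symm)
  have hgen : Ideal.span (l '' t ∪ hs '' {i}ᶜ) ⊔ maximalIdeal R ^ 2 = maximalIdeal R := by
    have hdrop : Ideal.span (hs '' {i}ᶜ) ≤ Ideal.span (Set.range hs) :=
      Ideal.span_mono (Set.image_subset_range _ _)
    rw [Ideal.span_union, sup_assoc]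
    refine le_antisymm ?_ ?_
    · exact sup_le (hmax ▸ le_sup_left)
        (sup_le (hdrop.trans (hmax ▸ le_sup_right)) (Ideal.pow_le_self two_ne_zero))
    · exact hmax.le.trans (sup_le_sup_left (span_range_le_of_isUnit_coeff ha hunit) _)
  have hcard : (l '' t ∪ hs '' {i}ᶜ).ncard + 1 ≤ (maximalIdeal S).spanFinrank + p := by
    have hunion := Set.ncard_union_le (l '' t) (hs '' {i}ᶜ)
    have hlift : (l '' t).ncard ≤ (maximalIdeal S).spanFinrank :=
      (Set.ncard_image_le hfg.finite_generators).trans hfg.generators_ncard.le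
    have hrest : (hs '' {i}ᶜ).ncard ≤ p - 1 :=
      (Set.ncard_image_le (Set.toFinite _)).trans_eq
        (by rw [Set.ncard_compl, Nat.card_fin, Set.ncard_singleton])
    have := i.pos
    omega
  have hdim : ringKrullDim S + p = ringKrullDim R := by
    have := ringKrullDim_add_length_eq_ringKrullDim_of_isRegular _ hreg
    rwa [List.length_ofFn, ofList_ofFn, ← hker,
      ringKrullDim_eq_of_ringEquiv (RingHom.quotientKerEquivOfSurjective hφ)] at this
  have hle := ringKrullDim_le_ncard_of_span_sup_sq_eq
    ((hfg.finite_generators.image l).union (Set.toFinite _)) hgen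
  rw [← hdim, ← IsRegularLocalRing.spanFinrank_maximalIdeal] at hle
  have : (maximalIdeal S).spanFinrank + p ≤ (l '' t ∪ hs '' {i}ᶜ).ncard := by exact_mod_cast hle
  omega

lemma ConormalIndependent.of_localization_atPrime {R ι : Type*} [CommRing R] [Fintype ι]
    {q : Ideal R} [q.IsPrime] {u : ι → R}
    (hu : ConormalIndependent (maximalIdeal (Localization.AtPrime q))
      (algebraMap R (Localization.AtPrime q) ∘ u)) :
    ConormalIndependent q u := by
  intro c hc i
  rw [← IsLocalization.AtPrime.to_map_mem_maximal_iff (Localization.AtPrime q) q]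
  refine hu (algebraMap R (Localization.AtPrime q) ∘ c) ?_ i
  rw [← RingHom.map_dotProduct, ← Localization.AtPrime.map_eq_maximalIdeal, ← Ideal.map_pow]
  exact Ideal.mem_map_of_mem _ hc

lemma ker_localRingHom_of_surjective {R S : Type*} [CommRing R] [CommRing S] {φ : R →+* S}
    (hφ : Function.Surjective φ) (P : Ideal S) [P.IsPrime] :
    RingHom.ker (Localization.localRingHom (P.comap φ) P φ rfl) =
      (RingHom.ker φ).map (algebraMap R (Localization.AtPrime (P.comap φ))) :=
  IsLocalization.ker_map _ _ (P.map_primeCompl_comap_of_surjective φ hφ)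

lemma conormalIndependent_comap_of_isRegularLocalRing {R S : Type*} [CommRing R]
    [IsNoetherianRing R] [CommRing S] {φ : R →+* S} (hφ : Function.Surjective φ) {p : ℕ}
    {hs : Fin p → R} (hreg : IsWeaklyRegular R (List.ofFn hs))
    (hker : RingHom.ker φ = Ideal.span (Set.range hs)) (P : Ideal S) [P.IsPrime]
    [IsRegularLocalRing (Localization.AtPrime P)] :
    ConormalIndependent (P.comap φ) hs := by
  let q := P.comap φ
  have hmem : ∀ r ∈ List.ofFn hs, r ∈ q := by
    intro r hr
    have hr' : r ∈ RingHom.ker φ := hker ▸ Ideal.subset_span (List.mem_ofFn.1 hr)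
    exact Ideal.ker_le_comap φ hr'
  have hloc := hreg.isRegular_of_isLocalization_of_mem (Localization.AtPrime q) q hmem
  rw [List.map_ofFn] at hloc
  refine .of_localization_atPrime <| conormalIndependent_maximalIdeal_of_isRegularLocalRing hloc
    (φ := Localization.localRingHom q P φ rfl) ?_ ?_
  · have : IsLocalization (q.primeCompl.map φ) (Localization.AtPrime P) := by
      rw [P.map_primeCompl_comap_of_surjective φ hφ]
      infer_instance
    exact IsLocalization.map_surjective_of_surjective q.primeCompl _ _ hφ
  · rw [ker_localRingHom_of_surjective hφ, hker, Ideal.map_span, ← Set.range_comp]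

lemma conormalIndependent_of_regularAtImage {R : Type*} [CommRing R] [IsNoetherianRing R] {p : ℕ}
    {hs : Fin p → R} (hreg : IsWeaklyRegular R (List.ofFn hs)) {q : Ideal R} [q.IsPrime]
    (hq : Ideal.span (Set.range hs) ≤ q) (hS : regularAtImage (Ideal.span (Set.range hs)) q) :
    ConormalIndependent q hs := by
  set h := Ideal.span (Set.range hs)
  have hsurj : Function.Surjective (Ideal.Quotient.mk h) := Ideal.Quotient.mk_surjective
  have hP : (q.map (Ideal.Quotient.mk h)).IsPrime :=
    Ideal.map_isPrime_of_surjective hsurj (by rwa [Ideal.mk_ker])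
  have hcomap : (q.map (Ideal.Quotient.mk h)).comap (Ideal.Quotient.mk h) = q := by
    rw [Ideal.comap_map_of_surjective' _ hsurj, Ideal.mk_ker, sup_eq_left.2 hq]
  have := (hS hP).isRegularLocalRing
  have hind := conormalIndependent_comap_of_isRegularLocalRing hsurj hreg Ideal.mk_ker
    (q.map (Ideal.Quotient.mk h))
  rwa [hcomap] at hind

end RegularQuotient

section Determinant

open RingTheory.Sequence Matrix

variable {R ι : Type*} [CommRing R] [Fintype ι]

lemma mk_mem_nonZeroDivisors_of_notMem_minimalPrimes {I : Ideal R}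
    [IsReduced (R ⧸ I)] {x : R} (hx : ∀ q ∈ I.minimalPrimes, x ∉ q) :
    Ideal.Quotient.mk I x ∈ nonZeroDivisors (R ⧸ I) := by
  have hrad : I.radical = I := ((Ideal.isRadical_iff_quotient_reduced I).2 ‹_›).radical
  have hunion : x ∉ ⋃ q ∈ I.minimalPrimes, (q : Set R) := by simpa using hx
  rw [Ideal.iUnion_minimalPrimes, hrad] at hunion
  rw [mem_nonZeroDivisors_iff_left]
  intro y hy
  obtain ⟨y, rfl⟩ := Ideal.Quotient.mk_surjective y
  rw [← map_mul, Ideal.Quotient.eq_zero_iff_mem] at hy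
  by_contra hy0
  exact hunion ⟨y, fun hyI => hy0 (Ideal.Quotient.eq_zero_iff_mem.2 hyI), hy⟩

lemma span_range_le_sup_of_mulVec_congr {I : Ideal R} {hs u : ι → R} {b : Matrix ι ι R}
    (hcong : ∀ i, hs i - (b *ᵥ u) i ∈ I) :
    Ideal.span (Set.range hs) ≤ I ⊔ Ideal.span (Set.range u) := by
  rw [Ideal.span_le]
  rintro _ ⟨i, rfl⟩
  have hbu : (b *ᵥ u) i ∈ Ideal.span (Set.range u) :=
    dotProduct_mem_of_right _ fun j => Ideal.subset_span (Set.mem_range_self j)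
  rw [← sub_add_cancel (hs i) ((b *ᵥ u) i)]
  exact add_mem (Ideal.mem_sup_left (hcong i)) (Ideal.mem_sup_right hbu)

variable [DecidableEq ι]

lemma exists_vecMul_mem_of_det_mem {q : Ideal R} [q.IsPrime] {b : Matrix ι ι R}
    (hb : b.det ∈ q) : ∃ a : ι → R, (∃ i, a i ∉ q) ∧ ∀ j, (a ᵥ* b) j ∈ q := by
  have hdet : (b.map (Ideal.Quotient.mk q)).det = 0 := by
    rw [← RingHom.mapMatrix_apply, ← RingHom.map_det]
    exact Ideal.Quotient.eq_zero_iff_mem.2 hb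
  obtain ⟨v, hv, hvb⟩ := exists_vecMul_eq_zero_iff.2 hdet
  obtain ⟨a, rfl⟩ := Ideal.Quotient.mk_surjective.comp_left v
  obtain ⟨i, hi⟩ := Function.ne_iff.1 hv
  refine ⟨a, ⟨i, fun hai => hi (Ideal.Quotient.eq_zero_iff_mem.2 hai)⟩, fun j => ?_⟩
  rw [← Ideal.Quotient.eq_zero_iff_mem, RingHom.map_vecMul]
  exact congrFun hvb j

lemma ConormalIndependent.det_notMem {q : Ideal R} [q.IsPrime] {hs u : ι → R}
    (hind : ConormalIndependent q hs) (hu : ∀ j, u j ∈ q) {b : Matrix ι ι R}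
    (hcong : ∀ i, hs i - (b *ᵥ u) i ∈ q ^ 2) : b.det ∉ q := by
  intro hdet
  obtain ⟨a, ⟨i, hi⟩, hab⟩ := exists_vecMul_mem_of_det_mem hdet
  refine hi (hind a ?_ i)
  have hsplit : a ⬝ᵥ hs = a ⬝ᵥ (hs - b *ᵥ u) + (a ᵥ* b) ⬝ᵥ u := by
    rw [dotProduct_sub, dotProduct_mulVec, sub_add_cancel]
  rw [hsplit]
  exact add_mem (dotProduct_mem_of_right a hcong) (dotProduct_mem_sq hab hu)

lemma det_mul_mem_of_mulVec_mem {J : Ideal R} {b : Matrix ι ι R} {u : ι → R}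
    (hbu : ∀ i, (b *ᵥ u) i ∈ J) (j : ι) : b.det * u j ∈ J := by
  have hcramer : b.adjugate *ᵥ (b *ᵥ u) = b.det • u := by
    rw [mulVec_mulVec, adjugate_mul, smul_mulVec, one_mulVec]
  have hmem : (b.adjugate *ᵥ (b *ᵥ u)) j ∈ J := dotProduct_mem_of_right _ hbu
  rwa [hcramer] at hmem

lemma det_mul_mem_of_mulVec_congr {I J : Ideal R} {hs u : ι → R} {b : Matrix ι ι R}
    (hhs : ∀ i, hs i ∈ J) (hcong : ∀ i, hs i - (b *ᵥ u) i ∈ I) (j : ι) :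
    b.det * u j ∈ I ⊔ J :=
  det_mul_mem_of_mulVec_mem (fun i => sub_sub_cancel (hs i) ((b *ᵥ u) i) ▸
    sub_mem (Ideal.mem_sup_right (hhs i)) (Ideal.mem_sup_left (hcong i))) j

lemma mk_det_mem_nonZeroDivisors_of_regularAtImage [IsNoetherianRing R] {g : Ideal R}
    [IsReduced (R ⧸ g)] {p : ℕ} {hs u : Fin p → R} (hseq : IsWeaklyRegular R (List.ofFn hs))
    (hhs : ∀ i, hs i ∈ g) (hu : ∀ j, u j ∈ g)
    (hreg : ∀ q ∈ g.minimalPrimes, regularAtImage (Ideal.span (Set.range hs)) q)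
    {b : Matrix (Fin p) (Fin p) R} (hcong : ∀ i, hs i - (b *ᵥ u) i ∈ g ^ 2) :
    Ideal.Quotient.mk g b.det ∈ nonZeroDivisors (R ⧸ g) := by
  refine mk_mem_nonZeroDivisors_of_notMem_minimalPrimes fun q hq => ?_
  have := hq.1.1
  have hgq : g ≤ q := hq.1.2
  have hhq : Ideal.span (Set.range hs) ≤ q :=
    Ideal.span_le.2 (Set.range_subset_iff.2 fun i => hgq (hhs i))
  exact (conormalIndependent_of_regularAtImage hseq hhq (hreg q hq)).det_notMem
    (fun j => hgq (hu j)) fun i => Ideal.pow_right_mono hgq 2 (hcong i)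

end Determinant

section ConormalTorsion

open Matrix

variable {R ι κ : Type*} [CommRing R] [Fintype ι] [Fintype κ] {h g : Ideal R}

/-- The preimage `torsionSet h g` of the torsion `T(M)`, as an ideal of `R`. -/
def torsionIdeal (h g : Ideal R) : Ideal R where
  carrier := torsionSet h g
  add_mem' := by
    rintro x y ⟨hx, β, hβ, hβx⟩ ⟨hy, γ, hγ, hγy⟩
    refine ⟨add_mem hx hy, β * γ, by rw [map_mul]; exact mul_mem hβ hγ, ?_⟩
    rw [show β * γ * (x + y) = γ * (β * x) + β * (γ * y) by ring]
    exact add_mem (Ideal.mul_mem_left _ _ hβx) (Ideal.mul_mem_left _ _ hγy)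
  zero_mem' := ⟨zero_mem _, 1, by rw [map_one]; exact one_mem _, by simp⟩
  smul_mem' := by
    rintro c x ⟨hx, β, hβ, hβx⟩
    refine ⟨Ideal.mul_mem_left _ c hx, β, hβ, ?_⟩
    rw [smul_eq_mul, mul_left_comm]
    exact Ideal.mul_mem_left _ c hβx

/-- Since `h ≤ g ^ 2 ⊔ span u`, a torsion relation on `v` extends to a relation on `u` and `v`
modulo `g ^ 2`. -/
lemma ConormalIndependent.mem_of_dotProduct_mem_torsionSet {u : ι → R} {v : κ → R}
    (hind : ConormalIndependent g (Sum.elim u v))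
    (hh : h ≤ g ^ 2 ⊔ Ideal.span (Set.range u)) {c : κ → R}
    (hc : c ⬝ᵥ v ∈ torsionSet h g) (j : κ) : c j ∈ g := by
  obtain ⟨-, β, hβ, hmem⟩ := hc
  obtain ⟨x, hx, y, hy, hxy⟩ := Submodule.mem_sup.1 (sup_le le_sup_left hh hmem)
  obtain ⟨a, rfl⟩ := Ideal.mem_span_range_iff_exists_fun.1 hy
  have hrel : Sum.elim (-a) (β • c) ⬝ᵥ Sum.elim u v = x := by
    rw [sumElim_dotProduct_sumElim, neg_dotProduct, smul_dotProduct, smul_eq_mul, ← hxy]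
    exact neg_add_eq_of_eq_add (add_comm _ _)
  have hβc : β * c j ∈ g := hind _ (hrel ▸ hx) (Sum.inr j)
  rw [← Ideal.Quotient.eq_zero_iff_mem, map_mul,
    mul_left_mem_nonZeroDivisors_eq_zero_iff hβ] at hβc
  exact Ideal.Quotient.eq_zero_iff_mem.1 hβc

lemma ConormalIndependent.dotProduct_mem_sq_of_mem_torsionSet {u : ι → R} {v : κ → R}
    (hind : ConormalIndependent g (Sum.elim u v))
    (hh : h ≤ g ^ 2 ⊔ Ideal.span (Set.range u)) (hv : ∀ j, v j ∈ g) {c : κ → R}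
    (hc : c ⬝ᵥ v ∈ torsionSet h g) : c ⬝ᵥ v ∈ g ^ 2 :=
  dotProduct_mem_sq (hind.mem_of_dotProduct_mem_torsionSet hh hc) hv

lemma exists_eq_dotProduct_add_dotProduct {u : ι → R} {v : κ → R} {f : R}
    (hf : f ∈ Ideal.span (Set.range (Sum.elim u v))) :
    ∃ (a : ι → R) (c : κ → R), f = a ⬝ᵥ u + c ⬝ᵥ v := by
  obtain ⟨d, rfl⟩ := Ideal.mem_span_range_iff_exists_fun.1 hf
  exact ⟨d ∘ Sum.inl, d ∘ Sum.inr, Fintype.sum_sum_type _⟩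

lemma exists_sub_dotProduct_mem_torsionSet {σ : Type*} {u : σ → R} {v : κ → R}
    (hu : ∀ i, u i ∈ torsionSet h g) {f : R}
    (hf : f ∈ Ideal.span (Set.range (Sum.elim u v))) :
    ∃ c : κ → R, f - c ⬝ᵥ v ∈ torsionSet h g := by
  rw [Set.Sum.elim_range, Ideal.span_union] at hf
  obtain ⟨x, hx, y, hy, rfl⟩ := Submodule.mem_sup.1 hf
  obtain ⟨c, rfl⟩ := Ideal.mem_span_range_iff_exists_fun.1 hy
  have huT : Ideal.span (Set.range u) ≤ torsionIdeal h g :=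
    Ideal.span_le.2 (Set.range_subset_iff.2 hu)
  exact ⟨c, (add_sub_cancel_right x (c ⬝ᵥ v)).symm ▸ huT hx⟩

lemma ConormalIndependent.exists_sub_dotProduct_mem_sq {u : ι → R} {v : κ → R}
    (hind : ConormalIndependent g (Sum.elim u v))
    (hh : h ≤ g ^ 2 ⊔ Ideal.span (Set.range u)) (hu : ∀ i, u i ∈ torsionSet h g)
    (hspan : g = Ideal.span (Set.range (Sum.elim u v))) {f : R} (hf : f ∈ torsionSet h g) :
    ∃ a : ι → R, f - a ⬝ᵥ u ∈ g ^ 2 := by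
  obtain ⟨a, c, rfl⟩ := exists_eq_dotProduct_add_dotProduct (hspan ▸ hf.1)
  refine ⟨a, ?_⟩
  have hv : ∀ j, v j ∈ g := fun j => hspan ▸ Ideal.subset_span ⟨Sum.inr j, rfl⟩
  have hau : a ⬝ᵥ u ∈ torsionIdeal h g := dotProduct_mem_of_right a hu
  have hcv : c ⬝ᵥ v ∈ torsionIdeal h g := (Ideal.add_mem_iff_right _ hau).1 hf
  rw [add_sub_cancel_left]
  exact hind.dotProduct_mem_sq_of_mem_torsionSet hh hv hcv

lemma exists_equiv_comp_eq_sumElim_tailFam {O : Type*} {p n : ℕ} (hpn : p ≤ n) (gs : Fin n → O) :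
    ∃ e : Fin p ⊕ Fin (n - p) ≃ Fin n,
      gs ∘ e = Sum.elim (fun j => gs (Fin.castLE hpn j)) (tailFam gs p) := by
  refine ⟨finSumFinEquiv.trans (finCongr (Nat.add_sub_of_le hpn)), ?_⟩
  ext (j | j) <;> rfl

end ConormalTorsion

theorem statement12_general {O : Type*} [CommRing O] [IsNoetherianRing O]
    (h g : Ideal O) [IsReduced (O ⧸ g)] {p n : ℕ} (hpn : p ≤ n)
    (hs : Fin p → O) (gs : Fin n → O)
    (hhseq : RingTheory.Sequence.IsWeaklyRegular O (List.ofFn hs))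
    (hhgen : h = Ideal.span (Set.range hs))
    (hgseq : RingTheory.Sequence.IsWeaklyRegular O (List.ofFn gs))
    (hggen : g = Ideal.span (Set.range gs))
    (hreg : ∀ q ∈ g.minimalPrimes, regularAtImage h q)
    (b : Fin p → Fin p → O)
    (hcong : ∀ i : Fin p, hs i - ∑ j, b i j * gs (Fin.castLE hpn j) ∈ g ^ 2) :
    Ideal.Quotient.mk g (Matrix.det (Matrix.of b)) ∈ nonZeroDivisors (O ⧸ g) ∧
    (∀ j : Fin p, gs (Fin.castLE hpn j) ∈ torsionSet h g) ∧
    (∀ f ∈ torsionSet h g, ∃ c : Fin p → O,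
        f - ∑ j, c j * gs (Fin.castLE hpn j) ∈ g ^ 2 ⊔ h) ∧
    (∀ f ∈ g, ∃ c : Fin (n - p) → O, f - ∑ j, c j * tailFam gs p j ∈ torsionSet h g) ∧
    (∀ c : Fin (n - p) → O,
        (∑ j, c j * tailFam gs p j) ∈ torsionSet h g → ∀ j, c j ∈ g) ∧
    (∀ c : Fin (n - p) → O,
        (∑ j, c j * tailFam gs p j) ∈ torsionSet h g →
          (∑ j, c j * tailFam gs p j) ∈ g ^ 2 ⊔ h) := by
  obtain ⟨e, he⟩ := exists_equiv_comp_eq_sumElim_tailFam hpn gs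
  let u : Fin p → O := fun j => gs (Fin.castLE hpn j)
  have hgs : ∀ j, gs j ∈ g := fun j => hggen ▸ Ideal.subset_span ⟨j, rfl⟩
  have hspan : g = Ideal.span (Set.range (Sum.elim u (tailFam gs p))) := by
    rw [hggen, ← he, e.surjective.range_comp]
  have hind : ConormalIndependent g (Sum.elim u (tailFam gs p)) :=
    he ▸ (hggen ▸ conormalIndependent_of_isWeaklyRegular hgseq).comp_equiv e
  have hle : h ≤ g ^ 2 ⊔ Ideal.span (Set.range u) :=
    hhgen ▸ span_range_le_sup_of_mulVec_congr hcong
  have hhs : ∀ i, hs i ∈ h := fun i => hhgen ▸ Ideal.subset_span ⟨i, rfl⟩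
  have hhg : h ≤ g := hle.trans <| sup_le (Ideal.pow_le_self two_ne_zero) <|
    Ideal.span_le.2 <| Set.range_subset_iff.2 fun _ => hgs _
  have hdet : Ideal.Quotient.mk g (Matrix.of b).det ∈ nonZeroDivisors (O ⧸ g) :=
    mk_det_mem_nonZeroDivisors_of_regularAtImage hhseq (fun i => hhg (hhs i)) (fun _ => hgs _)
      (hhgen ▸ hreg) hcong
  have hu : ∀ j, u j ∈ torsionSet h g := fun j =>
    ⟨hgs _, _, hdet, det_mul_mem_of_mulVec_congr hhs hcong j⟩
  exact ⟨hdet, hu,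
    fun f hf => (hind.exists_sub_dotProduct_mem_sq hle hu hspan hf).imp fun _ => Ideal.mem_sup_left,
    fun f hf => exists_sub_dotProduct_mem_torsionSet hu (hspan ▸ hf),
    fun c => hind.mem_of_dotProduct_mem_torsionSet hle,
    fun c hc => Ideal.mem_sup_left <|
      hind.dotProduct_mem_sq_of_mem_torsionSet hle (fun _ => hgs _) hc⟩

/-- Proposition `free1`, parts 1) and 2): `b = det(b_{ij})` is a non-zero-divisor in
`O/g`, the images of `g₁, …, g_p` generate `T(M)`, the images of `g_{p+1}, …, gₙ`
freely generate `N = M/T(M)` over `O/g`, and `M ≅ T(M) ⊕ N`. -/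
theorem statement12 {k : Type*} [Field k] [CharZero k] {m : ℕ}
    (h g : Ideal (MvPolynomial (Fin m) k)) (hle : h ≤ g)
    [IsReduced (MvPolynomial (Fin m) k ⧸ g)]
    [ConnectedSpace (PrimeSpectrum (MvPolynomial (Fin m) k ⧸ g))]
    {p n : ℕ} (hpn : p ≤ n)
    (hs : Fin p → MvPolynomial (Fin m) k) (gs : Fin n → MvPolynomial (Fin m) k)
    (hhseq : RingTheory.Sequence.IsRegular (MvPolynomial (Fin m) k) (List.ofFn hs))
    (hhgen : h = Ideal.span (Set.range hs))
    (hgseq : RingTheory.Sequence.IsRegular (MvPolynomial (Fin m) k) (List.ofFn gs))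
    (hggen : g = Ideal.span (Set.range gs))
    (hreg : ∀ q ∈ g.minimalPrimes, regularAtImage h q)
    (b : Fin p → Fin p → MvPolynomial (Fin m) k)
    (hcong : ∀ i : Fin p, hs i - ∑ j, b i j * gs (Fin.castLE hpn j) ∈ g ^ 2) :
    Ideal.Quotient.mk g (Matrix.det (Matrix.of b)) ∈
        nonZeroDivisors (MvPolynomial (Fin m) k ⧸ g) ∧
    (∀ j : Fin p, gs (Fin.castLE hpn j) ∈ torsionSet h g) ∧
    (∀ f ∈ torsionSet h g, ∃ c : Fin p → MvPolynomial (Fin m) k,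
        f - ∑ j, c j * gs (Fin.castLE hpn j) ∈ g ^ 2 ⊔ h) ∧
    (∀ f ∈ g, ∃ c : Fin (n - p) → MvPolynomial (Fin m) k,
        f - ∑ j, c j * tailFam gs p j ∈ torsionSet h g) ∧
    (∀ c : Fin (n - p) → MvPolynomial (Fin m) k,
        (∑ j, c j * tailFam gs p j) ∈ torsionSet h g → ∀ j, c j ∈ g) ∧
    (∀ c : Fin (n - p) → MvPolynomial (Fin m) k,
        (∑ j, c j * tailFam gs p j) ∈ torsionSet h g →
          (∑ j, c j * tailFam gs p j) ∈ g ^ 2 ⊔ h) :=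
  statement12_general h g hpn hs gs hhseq.1 hhgen hgseq.1 hggen hreg b hcong
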